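/- Suppose 𝕡 is the chain pomset on [s] (the total order 1 ≺ 2 ≺ … ≺ s), all blocks have the same dimension, k_1 = k_2 = … = k_s = t, and 𝒞 ⊆ ℤ_m^n is an MDS linear (n, m^k, d) (𝕡,π)-code. Then for every ideal I of 𝕡: |B_I ∩ 𝒞| = 1 if |I| ≤ ((n−k)/t)·l; |B_I ∩ 𝒞| = m^{tλ−n+k} if |I| = λ·l ≥ ((n−k)/t)·l for an integer λ; and |B_I ∩ 𝒞| = (2p+1)^t · m^{tλ−n+k} if |I| = λ·l + p > ((n−k)/t)·l for integers λ and 1 ≤ p ≤ l−1. -/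

import Mathlib

open scoped Classical

noncomputable section

/-- Lee weight of an element of `ZMod m`. -/
def leeWt (m : ℕ) (a : ZMod m) : ℕ := min a.val (m - a.val)

/-- Block Lee weight of the `i`-th block of `u`. -/
def blockWt (m s : ℕ) (π : Fin s → ℕ) (u : ∀ i : Fin s, Fin (π i) → ZMod m)
    (i : Fin s) : ℕ :=
  Finset.univ.sup fun t => leeWt m (u i t)

/-- The `(𝕡,π)`-weight of `u`. -/
def pomsetWt (m s : ℕ) (P : PartialOrder (Fin s)) (π : Fin s → ℕ)
    (u : ∀ i : Fin s, Fin (π i) → ZMod m) : ℕ :=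
  ∑ i : Fin s,
    if ∃ j, j ≠ i ∧ P.le i j ∧ 0 < blockWt m s π u j then m / 2
    else blockWt m s π u i

/-- The pomset block distance. -/
def pomsetDist (m s : ℕ) (P : PartialOrder (Fin s)) (π : Fin s → ℕ)
    (u v : ∀ i : Fin s, Fin (π i) → ZMod m) : ℕ :=
  pomsetWt m s P π (u - v)

/-- An ideal of the pomset `𝕡`, given by its count function `I : [s] → {0,…,⌊m/2⌋}`. -/
def IsIdeal (m s : ℕ) (P : PartialOrder (Fin s)) (I : Fin s → ℕ) : Prop :=
  (∀ a, I a ≤ m / 2) ∧ ∀ a b, 0 < I a → P.le b a → b ≠ a → I b = m / 2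

/-- An ideal has full count if every element of its root set has count `⌊m/2⌋`. -/
def FullCount (m : ℕ) {s : ℕ} (I : Fin s → ℕ) : Prop :=
  ∀ a, 0 < I a → I a = m / 2

/-- The cardinality `|I|` of an ideal. -/
def idealCard {s : ℕ} (I : Fin s → ℕ) : ℕ := ∑ a, I a

/-- The cardinality `|I*|` of the root set of an ideal. -/
def rootCard {s : ℕ} (I : Fin s → ℕ) : ℕ :=
  (Finset.univ.filter fun a => 0 < I a).card

/-- `Σ_{i ∈ I*} k_i`. -/
def rootSum {s : ℕ} (π I : Fin s → ℕ) : ℕ :=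
  ∑ a ∈ Finset.univ.filter (fun a => 0 < I a), π a

/-- The `I`-ball centered at `u`. -/
def ballI (m s : ℕ) (π : Fin s → ℕ) (I : Fin s → ℕ)
    (u : ∀ i : Fin s, Fin (π i) → ZMod m) :
    Set (∀ i : Fin s, Fin (π i) → ZMod m) :=
  {v | ∀ i, blockWt m s π (u - v) i ≤ I i}

/-- `𝒞` is `I`-perfect: the `I`-balls centered at codewords are pairwise
disjoint and cover the whole space. -/
def IPerfect (m s : ℕ) (π : Fin s → ℕ) (I : Fin s → ℕ)
    (C : Set (∀ i : Fin s, Fin (π i) → ZMod m)) : Prop :=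
  (C.Pairwise fun c c' => Disjoint (ballI m s π I c) (ballI m s π I c')) ∧
  (⋃ c ∈ C, ballI m s π I c) = Set.univ

/-- The `r`-ball centered at `u`. -/
def ballR (m s : ℕ) (P : PartialOrder (Fin s)) (π : Fin s → ℕ) (r : ℕ)
    (u : ∀ i : Fin s, Fin (π i) → ZMod m) :
    Set (∀ i : Fin s, Fin (π i) → ZMod m) :=
  {v | pomsetDist m s P π u v ≤ r}

/-- The standard dot product on `ℤ_m^n`. -/
def dotProd (m s : ℕ) (π : Fin s → ℕ)
    (c v : ∀ i : Fin s, Fin (π i) → ZMod m) : ZMod m :=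
  ∑ i, ∑ t, c i t * v i t

/-- The dual code `𝒞^⊥`. -/
def dualCode (m s : ℕ) (π : Fin s → ℕ)
    (C : Set (∀ i : Fin s, Fin (π i) → ZMod m)) :
    Set (∀ i : Fin s, Fin (π i) → ZMod m) :=
  {v | ∀ c ∈ C, dotProd m s π c v = 0}

/-- The dual pomset, encoded by the opposite partial order. -/
def dualOrder (s : ℕ) (P : PartialOrder (Fin s)) : PartialOrder (Fin s) where
  le a b := P.le b a
  lt a b := P.lt b a
  le_refl a := P.le_refl a
  le_trans a b c h1 h2 := P.le_trans _ _ _ h2 h1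
  lt_iff_le_not_ge a b := P.lt_iff_le_not_ge b a
  le_antisymm a b h1 h2 := (P.le_antisymm _ _ h1 h2).symm

/-- The minimum `(𝕡,π)`-distance of a code. -/
def minDist (m s : ℕ) (P : PartialOrder (Fin s)) (π : Fin s → ℕ)
    (C : Set (∀ i : Fin s, Fin (π i) → ZMod m)) : ℕ :=
  sInf {r | ∃ c ∈ C, ∃ c' ∈ C, c ≠ c' ∧ r = pomsetWt m s P π (c - c')}

/-- `𝒞` is an MDS `(𝕡,π)`-code: it attains the Singleton bound
`n − ⌈log_m K⌉ ≥ max { Σ_{i∈I*} k_i : I ideal, |I*| = ⌊(d−1)/⌊m/2⌋⌋ }`. -/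
def IsMDS (m s : ℕ) (P : PartialOrder (Fin s)) (π : Fin s → ℕ)
    (C : Set (∀ i : Fin s, Fin (π i) → ZMod m)) : Prop :=
  (∀ I, IsIdeal m s P I →
      rootCard I = (minDist m s P π C - 1) / (m / 2) →
      rootSum π I ≤ (∑ i, π i) - Nat.clog m (Nat.card ↥C)) ∧
  (∃ I, IsIdeal m s P I ∧
      rootCard I = (minDist m s P π C - 1) / (m / 2) ∧
      rootSum π I = (∑ i, π i) - Nat.clog m (Nat.card ↥C))

/-- The chain pomset on `[s]`: the usual total order on `Fin s`. -/
def chainOrder (s : ℕ) : PartialOrder (Fin s) := inferInstance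

lemma aux_leeWt_neg (m : ℕ) [NeZero m] (a : ZMod m) : leeWt m (-a) = leeWt m a := by
  unfold leeWt
  rw [ZMod.neg_val]
  have := ZMod.val_lt a
  split_ifs with h
  · subst h; simp
  · omega

lemma aux_leeWt_le (m : ℕ) [NeZero m] (a : ZMod m) : leeWt m a ≤ m / 2 := by
  unfold leeWt
  have := ZMod.val_lt a
  omega

lemma aux_leeWt_eq_zero (m : ℕ) [NeZero m] (a : ZMod m) : leeWt m a = 0 ↔ a = 0 := by
  unfold leeWt
  have := ZMod.val_lt a
  rw [← ZMod.val_eq_zero]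
  omega

lemma aux_leeCard (m j : ℕ) [NeZero m] :
    (Finset.univ.filter fun a : ZMod m => leeWt m a ≤ j).card =
      if j < m / 2 then 2 * j + 1 else m := by
  split_ifs with h
  · have h1 : ((Finset.univ.filter fun a : ZMod m => leeWt m a ≤ j).image ZMod.val).card =
        (Finset.univ.filter fun a : ZMod m => leeWt m a ≤ j).card :=
      Finset.card_image_of_injective _ (ZMod.val_injective m)
    rw [← h1]
    have h2 : (Finset.univ.filter fun a : ZMod m => leeWt m a ≤ j).image ZMod.val =
        Finset.range (j + 1) ∪ Finset.Ico (m - j) m := by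
      ext x
      simp only [Finset.mem_image, Finset.mem_filter, Finset.mem_univ, true_and,
        Finset.mem_union, Finset.mem_range, Finset.mem_Ico]
      constructor
      · rintro ⟨a, ha, rfl⟩
        unfold leeWt at ha
        have := ZMod.val_lt a
        omega
      · intro hx
        have hxm : x < m := by omega
        refine ⟨(x : ZMod m), ?_, ZMod.val_cast_of_lt hxm⟩
        unfold leeWt
        rw [ZMod.val_cast_of_lt hxm]
        omega
    rw [h2, Finset.card_union_of_disjoint]
    · simp; omega
    · rw [Finset.disjoint_left]
      intro x hx hx'
      simp at hx hx'
      omega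
  · rw [Finset.filter_true_of_mem, Finset.card_univ, ZMod.card]
    intro a _
    exact (aux_leeWt_le m a).trans (by omega)

lemma aux_sum_step (s : ℕ) (i : Fin s) (l x : ℕ) :
    ∑ j : Fin s, (if j < i then l else if j = i then x else 0) = i * l + x := by
  have : ∀ j : Fin s, (if j < i then l else if j = i then x else 0) =
      (if j < i then l else 0) + (if j = i then x else 0) := by
    intro j
    by_cases h : j < i
    · simp [h, h.ne]
    · simp [h]
  simp only [this, Finset.sum_add_distrib, Finset.sum_ite_eq', Finset.mem_univ, if_true]
  rw [← Finset.sum_filter, Finset.sum_const]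
  have : (Finset.univ.filter fun j : Fin s => j < i) = Finset.Iio i := by ext; simp
  rw [this, Fin.card_Iio, smul_eq_mul]

lemma aux_ideal_step (m s : ℕ) (I : Fin s → ℕ) (hI : IsIdeal m s (chainOrder s) I)
    (lam p : ℕ) (hp : p < m / 2) (hc : idealCard I = lam * (m / 2) + p) (i : Fin s) :
    I i = if (i : ℕ) < lam then m / 2 else if (i : ℕ) = lam then p else 0 := by
  obtain ⟨h1, h2⟩ := hI
  have h2 : ∀ a b : Fin s, 0 < I a → b < a → I b = m / 2 := fun a b ha hb =>
    h2 a b ha (le_of_lt hb) (ne_of_lt hb)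
  unfold idealCard at hc
  have hupper : I i < m / 2 → ∑ a, I a ≤ i * (m / 2) + I i := by
    intro hlt
    rw [← aux_sum_step s i (m / 2) (I i)]
    refine Finset.sum_le_sum fun j _ => ?_
    split_ifs with ha hb
    · exact h1 j
    · rw [hb]
    · have : i < j := by omega
      by_contra hj
      have := h2 j i (by omega) this
      omega
  have hlower : 0 < I i → i * (m / 2) + I i ≤ ∑ a, I a := by
    intro hpos
    rw [← aux_sum_step s i (m / 2) (I i)]
    refine Finset.sum_le_sum fun j _ => ?_
    split_ifs with ha hb
    · exact (h2 i j hpos ha).ge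
    · rw [hb]
    · exact Nat.zero_le _
  have hi := h1 i
  rw [hc] at hupper hlower
  generalize hl : m / 2 = l at *
  rcases lt_trichotomy (i : ℕ) lam with h | h | h
  · rw [if_pos h]
    have : (i + 1) * l ≤ lam * l := Nat.mul_le_mul_right _ h
    rw [add_mul] at this
    by_contra hne
    have := hupper (by omega)
    omega
  · rw [if_neg (by omega), if_pos h]
    rw [h] at hupper hlower
    by_cases hz : I i < l
    · have := hupper hz
      by_cases hz' : 0 < I i
      · have := hlower hz'; omega
      · omega
    · have := hlower (by omega); omega
  · rw [if_neg (by omega), if_neg (by omega)]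
    have : (lam + 1) * l ≤ i * l := Nat.mul_le_mul_right _ h
    rw [add_mul] at this
    by_contra hne
    have := hlower (by omega)
    omega

lemma aux_mem_ball (m s : ℕ) [NeZero m] (π I : Fin s → ℕ)
    (v : ∀ i : Fin s, Fin (π i) → ZMod m) :
    v ∈ ballI m s π I 0 ↔ ∀ i j, leeWt m (v i j) ≤ I i := by
  simp [ballI, blockWt, Finset.sup_le_iff, aux_leeWt_neg]

lemma aux_wt_pos (m s : ℕ) (hm : 4 ≤ m) [NeZero m] (P : PartialOrder (Fin s)) (π : Fin s → ℕ)
    (v : ∀ i : Fin s, Fin (π i) → ZMod m) (hv : v ≠ 0) : 0 < pomsetWt m s P π v := by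
  have : ∃ i j, v i j ≠ 0 := by
    by_contra h
    push Not at h
    exact hv (by ext i j; simp [h i j])
  obtain ⟨i, j, hij⟩ := this
  have hb : 0 < blockWt m s π v i := by
    have h1 : leeWt m (v i j) ≤ blockWt m s π v i :=
      Finset.le_sup (f := fun t => leeWt m (v i t)) (Finset.mem_univ j)
    have h2 : leeWt m (v i j) ≠ 0 := fun h => hij ((aux_leeWt_eq_zero m _).1 h)
    omega
  unfold pomsetWt
  refine Finset.sum_pos' (fun _ _ => Nat.zero_le _) ⟨i, Finset.mem_univ _, ?_⟩
  split_ifs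
  · omega
  · exact hb

lemma aux_card_lt (s r : ℕ) (hr : r ≤ s) :
    (Finset.univ.filter fun j : Fin s => (j : ℕ) < r).card = r := by
  rw [Fin.card_filter_val_lt]; omega

lemma aux_wt_le (m s : ℕ) [NeZero m] (π : Fin s → ℕ) (r : ℕ) (hr : r ≤ s)
    (v : ∀ i : Fin s, Fin (π i) → ZMod m) (hv : ∀ i : Fin s, r ≤ i → v i = 0) :
    pomsetWt m s (chainOrder s) π v ≤ r * (m / 2) := by
  have hz : ∀ i : Fin s, r ≤ i → blockWt m s π v i = 0 := by
    intro i hi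
    rw [blockWt, ← Nat.le_zero, Finset.sup_le_iff]
    intro j _
    rw [hv i hi]
    simp [leeWt]
  have : ∑ j : Fin s, (if (j : ℕ) < r then m / 2 else 0) = r * (m / 2) := by
    rw [← Finset.sum_filter, Finset.sum_const, aux_card_lt s r hr, smul_eq_mul]
  rw [← this, pomsetWt]
  refine Finset.sum_le_sum fun i _ => ?_
  by_cases hi : (i : ℕ) < r
  · rw [if_pos hi]
    split_ifs
    · exact le_rfl
    · exact Finset.sup_le fun j _ => aux_leeWt_le m _
  · rw [if_neg hi, if_neg, hz i (by omega)]
    rintro ⟨j, _, hle, hpos⟩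
    have hle : i ≤ j := hle
    have : (i : ℕ) ≤ j := hle
    rw [hz j (by omega)] at hpos
    omega

/-- Projection of codewords on the blocks of index at least `r`. -/
def auxProj (m s : ℕ) (π : Fin s → ℕ) (r : ℕ) (v : ∀ i : Fin s, Fin (π i) → ZMod m) :
    ∀ i : {i : Fin s // r ≤ (i : ℕ)}, Fin (π i.1) → ZMod m := fun i => v i.1

lemma aux_prod_ge (s r : ℕ) (f : Fin s → ℕ) :
    ∏ i : {i : Fin s // r ≤ (i : ℕ)}, f i.1 = ∏ i : Fin s, if r ≤ (i : ℕ) then f i else 1 := by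
  rw [← Finset.prod_filter]
  exact (Finset.prod_subtype _ (by simp) f).symm

lemma aux_card_box (m s : ℕ) [NeZero m] (π : Fin s → ℕ) (t : ℕ) (ht : ∀ i, π i = t) (r : ℕ)
    (I : Fin s → ℕ) :
    Nat.card {w : ∀ i : {i : Fin s // r ≤ (i : ℕ)}, Fin (π i.1) → ZMod m |
      ∀ i j, leeWt m (w i j) ≤ I i.1} =
    ∏ i : Fin s, if r ≤ (i : ℕ) then (if I i < m / 2 then 2 * I i + 1 else m) ^ t else 1 := by
  rw [← aux_prod_ge s r (fun i => (if I i < m / 2 then 2 * I i + 1 else m) ^ t)]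
  have : {w : ∀ i : {i : Fin s // r ≤ (i : ℕ)}, Fin (π i.1) → ZMod m |
      ∀ i j, leeWt m (w i j) ≤ I i.1} =
      ((Fintype.piFinset fun i : {i : Fin s // r ≤ (i : ℕ)} =>
        Fintype.piFinset fun _ : Fin (π i.1) =>
          Finset.univ.filter fun a : ZMod m => leeWt m a ≤ I i.1 : Finset _) : Set _) := by
    ext w
    simp
  rw [this, Nat.card_coe_set_eq, Set.ncard_coe_finset, Fintype.card_piFinset]
  refine Finset.prod_congr rfl fun i _ => ?_
  rw [Fintype.card_piFinset_const, aux_leeCard, ht]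

lemma aux_card_step (m s : ℕ) [NeZero m] (t r lam p : ℕ) (hr : r ≤ lam)
    (I : Fin s → ℕ) (hp : p < m / 2)
    (hs : lam ≤ s) (hps : 0 < p → lam < s)
    (hI : ∀ i : Fin s, I i = if (i : ℕ) < lam then m / 2 else if (i : ℕ) = lam then p else 0) :
    (∏ i : Fin s, if r ≤ (i : ℕ) then (if I i < m / 2 then 2 * I i + 1 else m) ^ t else 1) =
      (2 * p + 1) ^ t * m ^ (t * (lam - r)) := by
  have key : ∀ i : Fin s,
      (if r ≤ (i : ℕ) then (if I i < m / 2 then 2 * I i + 1 else m) ^ t else 1) =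
      (if (i : ℕ) = lam then (2 * p + 1) ^ t else 1) *
        (if r ≤ (i : ℕ) ∧ (i : ℕ) < lam then m ^ t else 1) := by
    intro i
    rw [hI i]
    rcases lt_trichotomy (i : ℕ) lam with h | h | h
    · by_cases h' : r ≤ (i : ℕ)
      · simp [h, h', h.ne]
      · simp [h', h.ne]
    · simp [h, hr, hp]
    · have : r ≤ (i : ℕ) := by omega
      have h0 : 0 < m / 2 := by omega
      have e1 : ¬ (i : ℕ) < lam := by omega
      have e2 : ¬ (i : ℕ) = lam := by omega
      simp only [this, e1, e2, h0, if_true, if_false, and_false]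
      simp
  rw [Finset.prod_congr rfl fun i _ => key i, Finset.prod_mul_distrib]
  congr 1
  · by_cases h : lam < s
    · rw [Finset.prod_eq_single (⟨lam, h⟩ : Fin s)]
      · simp
      · intro b _ hb
        rw [if_neg]
        intro h'
        exact hb (Fin.ext h')
      · simp
    · have : p = 0 := by by_contra h'; exact h (hps (by omega))
      subst this
      simp
  · rw [← Finset.prod_filter, Finset.prod_const, ← pow_mul]
    have h1 : (Finset.univ.filter fun i : Fin s => r ≤ (i : ℕ) ∧ (i : ℕ) < lam).card = lam - r := by
      have h2 : ((Finset.univ.filter fun i : Fin s => r ≤ (i : ℕ) ∧ (i : ℕ) < lam).image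
          Fin.val) = Finset.Ico r lam := by
        ext x
        simp only [Finset.mem_image, Finset.mem_filter, Finset.mem_univ, true_and, Finset.mem_Ico]
        constructor
        · rintro ⟨a, ha, rfl⟩; exact ha
        · intro hx; exact ⟨⟨x, by omega⟩, hx, rfl⟩
      rw [← Finset.card_image_of_injective _ Fin.val_injective, h2, Nat.card_Ico]
    rw [h1]

/-- `|B_I ∩ 𝒞|` for an MDS linear code on a chain pomset with
equal block dimensions. -/
theorem chain_mds_ball_card
    (m s : ℕ) (hm : 4 ≤ m) (hs : 1 ≤ s)
    (π : Fin s → ℕ) (hπ : ∀ i, 0 < π i)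
    (t : ℕ) (ht : ∀ i, π i = t)
    (n k d : ℕ) (hn : n = ∑ i, π i)
    (C : Submodule (ZMod m) (∀ i : Fin s, Fin (π i) → ZMod m))
    (hcard : Nat.card ↥C = m ^ k)
    (hd : IsLeast {r | ∃ c ∈ (C : Set (∀ i : Fin s, Fin (π i) → ZMod m)),
      ∃ c' ∈ (C : Set (∀ i : Fin s, Fin (π i) → ZMod m)), c ≠ c' ∧
        r = pomsetWt m s (chainOrder s) π (c - c')} d)
    (hmds : IsMDS m s (chainOrder s) π (C : Set (∀ i : Fin s, Fin (π i) → ZMod m))) :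
    ∀ I, IsIdeal m s (chainOrder s) I →
      (idealCard I ≤ ((n - k) / t) * (m / 2) →
        Nat.card ↥(ballI m s π I 0 ∩ (C : Set (∀ i : Fin s, Fin (π i) → ZMod m))) = 1) ∧
      (∀ lam : ℕ, idealCard I = lam * (m / 2) →
        ((n - k) / t) * (m / 2) ≤ idealCard I →
        Nat.card ↥(ballI m s π I 0 ∩ (C : Set (∀ i : Fin s, Fin (π i) → ZMod m))) =
          m ^ (t * lam + k - n)) ∧
      (∀ lam p : ℕ, 1 ≤ p → p ≤ m / 2 - 1 →
        idealCard I = lam * (m / 2) + p →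
        ((n - k) / t) * (m / 2) < idealCard I →
        Nat.card ↥(ballI m s π I 0 ∩ (C : Set (∀ i : Fin s, Fin (π i) → ZMod m))) =
          (2 * p + 1) ^ t * m ^ (t * lam + k - n)) := by
  haveI : NeZero m := ⟨by omega⟩
  have hl : 0 < m / 2 := by omega
  have ht0 : 0 < t := by have := hπ ⟨0, hs⟩; rwa [ht] at this
  have hn' : n = s * t := by rw [hn]; simp [ht]
  obtain ⟨-, J, -, hJ1, hJ2⟩ := hmds
  have hmin : minDist m s (chainOrder s) π (C : Set (∀ i : Fin s, Fin (π i) → ZMod m)) = d :=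
    hd.csInf_eq
  have hclog : Nat.clog m (Nat.card ↥(C : Set (∀ i : Fin s, Fin (π i) → ZMod m))) = k := by
    have : Nat.card ↥(C : Set (∀ i : Fin s, Fin (π i) → ZMod m)) = m ^ k := hcard
    rw [this, Nat.clog_pow _ _ (by omega)]
  rw [hmin] at hJ1
  rw [hclog, ← hn] at hJ2
  set r := (d - 1) / (m / 2) with hrdef
  have hrs : r ≤ s := by
    rw [← hJ1, rootCard]
    exact (Finset.card_le_univ _).trans (by simp)
  have hnk : n - k = r * t := by
    rw [← hJ2, rootSum, ← hJ1, rootCard]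
    simp [ht]
  have hdiv : (n - k) / t = r := by rw [hnk, Nat.mul_div_cancel _ ht0]
  have hkn : k ≤ n := by
    have h1 : Nat.card ↥C ≤ Nat.card (∀ i : Fin s, Fin (π i) → ZMod m) :=
      Nat.card_le_card_of_injective _ Subtype.val_injective
    have h2 : Nat.card (∀ i : Fin s, Fin (π i) → ZMod m) = m ^ n := by
      rw [Nat.card_eq_fintype_card, Fintype.card_pi]
      simp [ht, hn', ← pow_mul, mul_comm]
    rw [hcard, h2] at h1
    exact (Nat.pow_le_pow_iff_right (by omega)).1 h1
  have hdpos : 0 < d := by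
    obtain ⟨c, _, c', _, hne, rfl⟩ := hd.1
    exact aux_wt_pos m s hm _ π _ (sub_ne_zero.2 hne)
  have hdr : r * (m / 2) < d := by
    have := Nat.div_mul_le_self (d - 1) (m / 2)
    rw [← hrdef] at this
    omega
  have hinj : Function.Injective (fun c : C => auxProj m s π r c.1) := by
    intro c c' h
    by_contra hne
    have h1 : d ≤ pomsetWt m s (chainOrder s) π (c.1 - c'.1) :=
      hd.2 ⟨c.1, c.2, c'.1, c'.2, fun h => hne (Subtype.ext h), rfl⟩
    have h2 := aux_wt_le m s π r hrs (c.1 - c'.1) (fun i hi => by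
      have := congrFun h ⟨i, hi⟩
      simp only [auxProj] at this
      simp [this])
    omega
  have hbij : Function.Bijective (fun c : C => auxProj m s π r c.1) := by
    haveI : Finite C := inferInstance
    rw [Nat.bijective_iff_injective_and_card]
    refine ⟨hinj, ?_⟩
    have h1 := aux_card_box m s π t ht r (fun _ => m / 2)
    have h2 : {w : ∀ i : {i : Fin s // r ≤ (i : ℕ)}, Fin (π i.1) → ZMod m |
      ∀ i j, leeWt m (w i j) ≤ m / 2} = Set.univ := by
      ext w; simp [aux_leeWt_le]
    rw [h2, Nat.card_univ] at h1
    rw [hcard, h1, aux_card_step m s t r s 0 hrs _ hl le_rfl (by simp) (fun i => by simp)]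
    have : k = t * (s - r) := by
      rw [Nat.mul_sub, mul_comm t s, mul_comm t r, ← hn', ← hnk]; omega
    simp [this]
  intro I hI
  rw [hdiv]
  have hmod := Nat.div_add_mod (idealCard I) (m / 2)
  have main : ∀ lam p : ℕ, p < m / 2 → idealCard I = lam * (m / 2) + p →
      r * (m / 2) ≤ idealCard I →
      Nat.card ↥(ballI m s π I 0 ∩ (C : Set (∀ i : Fin s, Fin (π i) → ZMod m))) =
          (2 * p + 1) ^ t * m ^ (t * lam + k - n) := by
    intro lam p hp hc hle
    have hstep := aux_ideal_step m s I hI lam p hp hc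
    have hrl : r ≤ lam := by
      by_contra h
      have : (lam + 1) * (m / 2) ≤ r * (m / 2) := Nat.mul_le_mul_right _ (by omega)
      rw [add_mul] at this
      omega
    have hsum : idealCard I ≤ s * (m / 2) := by
      rw [idealCard]
      refine (Finset.sum_le_sum fun i _ => hI.1 i).trans (by simp)
    have hls : lam ≤ s := by
      by_contra h
      have : (s + 1) * (m / 2) ≤ lam * (m / 2) := Nat.mul_le_mul_right _ (by omega)
      rw [add_mul] at this
      omega
    have hps : 0 < p → lam < s := by
      intro hp0
      rcases hls.lt_or_eq with h | h
      · exact h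
      · subst h; omega
    have hexp : t * lam + k - n = t * (lam - r) := by
      rw [Nat.mul_sub, mul_comm t r, ← hnk]; omega
    rw [hexp, ← aux_card_step m s t r lam p hrl I hp hls hps hstep,
      ← aux_card_box m s π t ht r I]
    refine Nat.card_congr (Equiv.ofBijective
      (fun v => ⟨auxProj m s π r v.1, fun i j => (aux_mem_ball m s π I v.1).1 v.2.1 i.1 j⟩)
      ⟨?_, ?_⟩)
    · intro v v' h
      have h1 : auxProj m s π r v.1 = auxProj m s π r v'.1 := congrArg Subtype.val h
      have h2 := @hinj ⟨v.1, v.2.2⟩ ⟨v'.1, v'.2.2⟩ h1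
      exact Subtype.ext (by simpa using h2)
    · rintro ⟨w, hw⟩
      obtain ⟨c, hc'⟩ := hbij.2 w
      refine ⟨⟨c.1, ?_, c.2⟩, Subtype.ext hc'⟩
      rw [aux_mem_ball]
      intro i j
      by_cases hi : r ≤ (i : ℕ)
      · have := hw ⟨i, hi⟩ j
        rw [← hc'] at this
        exact this
      · rw [hstep i, if_pos (by omega)]
        exact aux_leeWt_le m _
  refine ⟨?_, ?_, ?_⟩
  · intro hle
    have hstep := aux_ideal_step m s I hI (idealCard I / (m / 2)) (idealCard I % (m / 2))
      (Nat.mod_lt _ hl) (by rw [mul_comm]; exact hmod.symm)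
    have hzero : ∀ i : Fin s, r ≤ (i : ℕ) → I i = 0 := by
      intro i hi
      rw [hstep i]
      have hdle : idealCard I / (m / 2) ≤ r := by
        calc _ ≤ r * (m / 2) / (m / 2) := Nat.div_le_div_right hle
          _ = r := Nat.mul_div_cancel _ hl
      rw [if_neg (by omega)]
      split_ifs with h
      · have : idealCard I / (m / 2) = r := by omega
        rw [this, mul_comm] at hmod
        omega
      · rfl
    rw [Nat.card_eq_one_iff_unique]
    refine ⟨⟨fun v v' => ?_⟩, ⟨⟨0, ?_, C.zero_mem⟩⟩⟩
    · have hv : ∀ v : ↥(ballI m s π I 0 ∩ (C : Set (∀ i : Fin s, Fin (π i) → ZMod m))),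
          auxProj m s π r v.1 = 0 := by
        intro v
        funext i j
        have := (aux_mem_ball m s π I v.1).1 v.2.1 i.1 j
        rw [hzero i.1 i.2, Nat.le_zero, aux_leeWt_eq_zero] at this
        exact this
      have h2 := @hinj ⟨v.1, v.2.2⟩ ⟨v'.1, v'.2.2⟩ ((hv v).trans (hv v').symm)
      exact Subtype.ext (by simpa using h2)
    · rw [aux_mem_ball]
      intro i j
      simp [leeWt]
  · intro lam hc hle
    rw [main lam 0 hl (by omega) hle]
    simp
  · intro lam p hp1 hp2 hc hlt
    exact main lam p (by omega) hc hlt.le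

end
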